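/- Fix an integer p ≥ 2, θ ∈ S^{p-1}, f ∈ 𝓕, and a sequence (κ_n) of nonzero real numbers with κ_n = O(1/√n). Then the sequence of alternatives P^{(n)}_{θ,κ_n,f} and the sequence of null hypotheses P_0^{(n)} are mutually contiguous; explicitly, for every sequence (A_n) of measurable sets A_n ⊆ (S^{p-1})^n, one has P_0^{(n)}(A_n) → 0 as n → ∞ if and only if P^{(n)}_{θ,κ_n,f}(A_n) → 0 as n → ∞. -/

import Mathlib

open MeasureTheory ProbabilityTheory Filter Matrix Real
open scoped ENNReal NNReal Topology

noncomputable section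

/-- The normalizing constant `c_p = 1 / ∫_{-1}^1 (1-s²)^{(p-3)/2} ds`. -/
def c0 (p : ℕ) : ℝ := 1 / ∫ s in (-1:ℝ)..1, (1 - s ^ 2) ^ (((p : ℝ) - 3) / 2)

/-- The normalizing constant `c_{p,κ,f} = 1 / ∫_{-1}^1 (1-s²)^{(p-3)/2} f(κ s²) ds`. -/
def cKF (p : ℕ) (κ : ℝ) (f : ℝ → ℝ) : ℝ :=
  1 / ∫ s in (-1:ℝ)..1, (1 - s ^ 2) ^ (((p : ℝ) - 3) / 2) * f (κ * s ^ 2)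

/-!
The density of `P_{θ,κ,f}` is `h / ∫ h dU` with `h(x) = f(κ (x ⬝ᵥ θ)²)`. Since `f(y) = 1 + O(y)` at
`0` and `κ_n = O(1/√n)`, the density `r_n` satisfies `|r_n - 1| ≤ ε_n` with `ε_n = O(1/√n)`; as it
integrates to one, the linear terms of `∫ r_n²` and `∫ 1/r_n` cancel and both are at most
`1 + 2 ε_n²`. Cauchy–Schwarz on the `n`-fold product then bounds `P_n(A)²` by
`P_0(A) (1 + 2 ε_n²)^n` and `P_0(A)²` by `P_n(A) (1 + 2 ε_n²)^n`, where the powers stay bounded.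

That `c_{p,κ,f} / c_p` is the constant making `P_{θ,κ,f}` a probability measure means that `x ⬝ᵥ θ`
has density `c_p (1 - s²)^{(p-3)/2}` under the uniform distribution. Both laws live on `[-1, 1]`,
so it suffices to compare moments: the odd ones vanish and the even ones obey the same recurrence,
by rotation invariance on one side and integration by parts on the other.
-/

section Contiguity

/-- Le Cam's relation `Q ◁ P`: `(Q n)` is contiguous with respect to `(P n)`. -/
def IsContiguous {Ω : ℕ → Type*} [∀ n, MeasurableSpace (Ω n)] (Q P : ∀ n, Measure (Ω n)) : Prop :=
  ∀ A : ∀ n, Set (Ω n), (∀ n, MeasurableSet (A n)) →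
    Tendsto (fun n => P n (A n)) atTop (𝓝 0) → Tendsto (fun n => Q n (A n)) atTop (𝓝 0)

theorem IsContiguous.of_eventually_sq_le {Ω : ℕ → Type*} [∀ n, MeasurableSpace (Ω n)]
    {Q P : ∀ n, Measure (Ω n)} {K : ℝ≥0∞} (hK : K ≠ ∞)
    (h : ∀ᶠ n in atTop, ∀ A, MeasurableSet A → Q n A ^ 2 ≤ P n A * K) : IsContiguous Q P := by
  intro A hA hP
  have hbound : Tendsto (fun n => (P n (A n) * K) ^ (2⁻¹ : ℝ)) atTop (𝓝 0) := by
    have hPK : Tendsto (fun n => P n (A n) * K) atTop (𝓝 0) := by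
      simpa only [zero_mul] using ENNReal.Tendsto.mul_const hP (Or.inr hK)
    simpa using hPK.ennrpow_const 2⁻¹
  refine tendsto_of_tendsto_of_tendsto_of_le_of_le' tendsto_const_nhds hbound
    (Eventually.of_forall fun _ => zero_le) (h.mono fun n hn => ?_)
  rw [ENNReal.le_rpow_inv_iff two_pos, ENNReal.rpow_two]
  exact hn _ (hA n)

theorem IsContiguous.of_eventually_sq_le_one_add_pow {Ω : ℕ → Type*}
    [∀ n, MeasurableSpace (Ω n)] {Q P : ∀ n, Measure (Ω n)} {b : ℕ → ℝ}
    (hb : b =O[atTop] fun n : ℕ => 1 / (n : ℝ))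
    (h : ∀ᶠ n in atTop, ∀ A, MeasurableSet A →
      Q n A ^ 2 ≤ P n A * ENNReal.ofReal (1 + b n) ^ n) : IsContiguous Q P := by
  obtain ⟨c, hc⟩ := hb.bound
  refine .of_eventually_sq_le (K := ENNReal.ofReal (Real.exp c)) ENNReal.ofReal_ne_top ?_
  filter_upwards [h, hc, eventually_gt_atTop 0] with n hn hbn hn0 A hA
  have hnb : n * b n ≤ c := by
    have hn0' : (0 : ℝ) < n := by exact_mod_cast hn0
    rw [Real.norm_of_nonneg (by positivity : (0 : ℝ) ≤ 1 / n), mul_one_div, le_div_iff₀ hn0'] at hbn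
    nlinarith [Real.le_norm_self (b n)]
  refine (hn A hA).trans ?_
  gcongr
  calc ENNReal.ofReal (1 + b n) ^ n ≤ ENNReal.ofReal (Real.exp (b n)) ^ n := by
        gcongr; linarith [Real.add_one_le_exp (b n)]
    _ = ENNReal.ofReal (Real.exp (n * b n)) := by
        rw [← ENNReal.ofReal_pow (Real.exp_nonneg _), Real.exp_nat_mul]
    _ ≤ ENNReal.ofReal (Real.exp c) := by gcongr

theorem tendsto_zero_of_isBigO_one_div_sqrt {ε : ℕ → ℝ}
    (hε : ε =O[atTop] fun n : ℕ => 1 / √(n : ℝ)) : Tendsto ε atTop (𝓝 0) :=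
  hε.trans_tendsto <| tendsto_const_nhds.div_atTop <|
    Real.tendsto_sqrt_atTop.comp tendsto_natCast_atTop_atTop

theorem isBigO_two_mul_sq_of_isBigO_one_div_sqrt {ε : ℕ → ℝ}
    (hε : ε =O[atTop] fun n : ℕ => 1 / √(n : ℝ)) :
    (fun n => 2 * ε n ^ 2) =O[atTop] fun n : ℕ => 1 / (n : ℝ) := by
  simpa only [div_pow, one_pow, Real.sq_sqrt (Nat.cast_nonneg _)] using
    (hε.pow 2).const_mul_left 2

theorem withDensity_apply_sq_le {E : Type*} [MeasurableSpace E] {μ : Measure E} {ρ : E → ℝ≥0∞}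
    (hρ : AEMeasurable ρ μ) {s : Set E} (hs : MeasurableSet s) :
    μ.withDensity ρ s ^ 2 ≤ μ s * ∫⁻ x, ρ x ^ 2 ∂μ := by
  have cauchy_schwarz := ENNReal.lintegral_mul_le_Lp_mul_Lq (μ.restrict s)
    Real.HolderConjugate.two_two (f := fun _ => 1) aemeasurable_const hρ.restrict
  have sq_sqrt (a : ℝ≥0∞) : (a ^ (1 / 2 : ℝ)) ^ 2 = a := by
    rw [← ENNReal.rpow_two, ← ENNReal.rpow_mul]; norm_num
  calc μ.withDensity ρ s ^ 2
      = (∫⁻ x in s, 1 * ρ x ∂μ) ^ 2 := by simp_rw [withDensity_apply _ hs, one_mul]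
    _ ≤ (∫⁻ _ in s, 1 ^ (2 : ℝ) ∂μ) * ∫⁻ x in s, ρ x ^ (2 : ℝ) ∂μ := by
        simpa only [Pi.mul_apply, mul_pow, sq_sqrt] using pow_le_pow_left₀ zero_le cauchy_schwarz 2
    _ ≤ μ s * ∫⁻ x, ρ x ^ 2 ∂μ := by
        simp only [ENNReal.rpow_two, one_pow, setLIntegral_one]
        gcongr
        exact Measure.restrict_le_self

end Contiguity

section Pi

variable {ι : Type*} [Fintype ι]

theorem lintegral_pi_prod_eq_prod {E : ι → Type*} [∀ i, MeasurableSpace (E i)]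
    {μ : ∀ i, Measure (E i)} [∀ i, IsProbabilityMeasure (μ i)] {f : ∀ i, E i → ℝ≥0∞}
    (hf : ∀ i, Measurable (f i)) :
    ∫⁻ x, ∏ i, f i (x i) ∂Measure.pi μ = ∏ i, ∫⁻ y, f i y ∂μ i := by
  have h := lintegral_prod_eq_prod_lintegral_of_indepFun Finset.univ
    (fun i (x : ∀ i, E i) => f i (x i)) (iIndepFun_pi (μ := μ) fun i => (hf i).aemeasurable)
    fun i => (hf i).comp (measurable_pi_apply i)
  simpa only [(measurePreserving_eval μ _).lintegral_comp (hf _)] using h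

theorem pi_withDensity {E : ι → Type*} [∀ i, MeasurableSpace (E i)]
    {μ : ∀ i, Measure (E i)} [∀ i, IsProbabilityMeasure (μ i)] {ρ : ∀ i, E i → ℝ≥0∞}
    (hρ : ∀ i, Measurable (ρ i)) [∀ i, SigmaFinite ((μ i).withDensity (ρ i))] :
    Measure.pi (fun i => (μ i).withDensity (ρ i)) =
      (Measure.pi μ).withDensity fun x => ∏ i, ρ i (x i) := by
  refine Measure.pi_eq fun s hs => ?_
  have indicator_prod (x : ∀ i, E i) : (Set.univ.pi s).indicator (fun x => ∏ i, ρ i (x i)) x =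
      ∏ i, (s i).indicator (ρ i) (x i) := by
    classical
    simp [Set.indicator_apply, Set.mem_pi, Finset.prod_ite_zero]
  calc (Measure.pi μ).withDensity (fun x => ∏ i, ρ i (x i)) (Set.univ.pi s)
      = ∫⁻ x, ∏ i, (s i).indicator (ρ i) (x i) ∂Measure.pi μ := by
        simp_rw [withDensity_apply _ (MeasurableSet.univ_pi hs),
          ← lintegral_indicator (MeasurableSet.univ_pi hs), indicator_prod]
    _ = ∏ i, (μ i).withDensity (ρ i) (s i) := by
        simp_rw [lintegral_pi_prod_eq_prod fun i => (hρ i).indicator (hs i),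
          lintegral_indicator (hs _), withDensity_apply _ (hs _)]

variable {E : Type*} [MeasurableSpace E] {μ : Measure E} [IsProbabilityMeasure μ] {ρ : E → ℝ≥0∞}

theorem pi_withDensity_apply_sq_le (hρ : Measurable ρ) [SigmaFinite (μ.withDensity ρ)]
    {A : Set (ι → E)} (hA : MeasurableSet A) :
    Measure.pi (fun _ => μ.withDensity ρ) A ^ 2 ≤
      Measure.pi (fun _ => μ) A * (∫⁻ x, ρ x ^ 2 ∂μ) ^ Fintype.card ι := by
  have hsq : ∫⁻ x : ι → E, (∏ i, ρ (x i)) ^ 2 ∂Measure.pi (fun _ => μ) =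
      (∫⁻ x, ρ x ^ 2 ∂μ) ^ Fintype.card ι := by
    simp_rw [← Finset.prod_pow, lintegral_pi_prod_eq_prod fun _ => hρ.pow_const 2,
      Finset.prod_const, Finset.card_univ]
  rw [pi_withDensity fun _ => hρ, ← hsq]
  have hprod : Measurable fun x : ι → E => ∏ i, ρ (x i) :=
    Finset.measurable_prod _ fun i _ => hρ.comp (measurable_pi_apply i)
  exact withDensity_apply_sq_le hprod.aemeasurable hA

theorem pi_apply_sq_le_pi_withDensity (hρ : Measurable ρ) (h0 : ∀ᵐ x ∂μ, ρ x ≠ 0)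
    (htop : ∀ᵐ x ∂μ, ρ x ≠ ∞) [IsProbabilityMeasure (μ.withDensity ρ)]
    {A : Set (ι → E)} (hA : MeasurableSet A) :
    Measure.pi (fun _ => μ) A ^ 2 ≤
      Measure.pi (fun _ => μ.withDensity ρ) A * (∫⁻ x, (ρ x)⁻¹ ∂μ) ^ Fintype.card ι := by
  have hback : (μ.withDensity ρ).withDensity (fun x => (ρ x)⁻¹) = μ :=
    withDensity_inv_same hρ h0 htop
  have hint : ∫⁻ x, (ρ x)⁻¹ ^ 2 ∂μ.withDensity ρ = ∫⁻ x, (ρ x)⁻¹ ∂μ := by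
    rw [lintegral_withDensity_eq_lintegral_mul _ hρ (g := fun x => (ρ x)⁻¹ ^ 2) (by fun_prop)]
    refine lintegral_congr_ae ?_
    filter_upwards [h0, htop] with x hx0 hxtop
    rw [Pi.mul_apply, sq, ← mul_assoc, ENNReal.mul_inv_cancel hx0 hxtop, one_mul]
  have : SigmaFinite ((μ.withDensity ρ).withDensity fun x => (ρ x)⁻¹) := by
    rw [hback]; infer_instance
  have h := pi_withDensity_apply_sq_le (μ := μ.withDensity ρ) (ρ := fun x => (ρ x)⁻¹) hρ.inv hA
  simpa only [hint, hback] using h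

end Pi

section LocalAlternatives

variable {E : Type*} [MeasurableSpace E] {μ : Measure E} [IsProbabilityMeasure μ]

theorem lintegral_ofReal_le_of_ae_le_affine {r g : E → ℝ} {a b : ℝ} (hr : Integrable r μ)
    (hr1 : ∫ x, r x ∂μ = 1) (hg : ∀ᵐ x ∂μ, 0 ≤ g x)
    (hle : ∀ᵐ x ∂μ, g x ≤ 1 + b + a * (r x - 1)) :
    ∫⁻ x, ENNReal.ofReal (g x) ∂μ ≤ ENNReal.ofReal (1 + b) := by
  have hcentred : ∫ x, (1 + b + a * (r x - 1)) ∂μ = 1 + b := by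
    rw [integral_add (by fun_prop) (by fun_prop), integral_const_mul,
      integral_sub hr (by fun_prop), hr1]
    simp
  calc ∫⁻ x, ENNReal.ofReal (g x) ∂μ
      ≤ ∫⁻ x, ENNReal.ofReal (1 + b + a * (r x - 1)) ∂μ :=
        lintegral_mono_ae (hle.mono fun x hx => ENNReal.ofReal_le_ofReal hx)
    _ = ENNReal.ofReal (1 + b) := by
        have hbound : ∀ᵐ x ∂μ, 0 ≤ 1 + b + a * (r x - 1) := by
          filter_upwards [hg, hle] with x h0 h1 using h0.trans h1
        rw [← ofReal_integral_eq_lintegral_ofReal (by fun_prop) hbound, hcentred]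

variable {r : E → ℝ} {ε : ℝ}

theorem lintegral_ofReal_sq_le (hr : Integrable r μ) (hr1 : ∫ x, r x ∂μ = 1)
    (hε : ∀ᵐ x ∂μ, |r x - 1| ≤ ε) (hε1 : ε ≤ 1) :
    ∫⁻ x, ENNReal.ofReal (r x) ^ 2 ∂μ ≤ ENNReal.ofReal (1 + 2 * ε ^ 2) := by
  have hr0 : ∀ᵐ x ∂μ, 0 ≤ r x := hε.mono fun x hx => by linarith [(abs_le.1 hx).1]
  rw [lintegral_congr_ae (hr0.mono fun x hx => (ENNReal.ofReal_pow hx 2).symm)]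
  refine lintegral_ofReal_le_of_ae_le_affine (a := 2) hr hr1 (ae_of_all _ fun x => sq_nonneg _) ?_
  filter_upwards [hε] with x hx
  nlinarith [sq_le_sq' (abs_le.1 hx).1 (abs_le.1 hx).2, sq_nonneg ε]

theorem lintegral_inv_ofReal_le (hr : Integrable r μ) (hr1 : ∫ x, r x ∂μ = 1)
    (hε : ∀ᵐ x ∂μ, |r x - 1| ≤ ε) (hε2 : ε ≤ 1 / 2) :
    ∫⁻ x, (ENNReal.ofReal (r x))⁻¹ ∂μ ≤ ENNReal.ofReal (1 + 2 * ε ^ 2) := by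
  have hr2 : ∀ᵐ x ∂μ, 1 / 2 ≤ r x := hε.mono fun x hx => by linarith [(abs_le.1 hx).1]
  rw [lintegral_congr_ae (hr2.mono fun x hx =>
    (ENNReal.ofReal_inv_of_pos (by linarith : 0 < r x)).symm)]
  refine lintegral_ofReal_le_of_ae_le_affine (a := -1) hr hr1
    (hr2.mono fun x hx => inv_nonneg.2 (by linarith)) ?_
  filter_upwards [hε, hr2] with x hx hx2
  have hsq : (r x - 1) ^ 2 ≤ ε ^ 2 := sq_le_sq' (abs_le.1 hx).1 (abs_le.1 hx).2
  have hinv : (r x)⁻¹ = 1 - (r x - 1) + (r x - 1) ^ 2 * (r x)⁻¹ := by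
    field_simp [(by linarith : r x ≠ 0)]
    ring
  have hinv2 : (r x)⁻¹ ≤ 2 := by
    rw [inv_le_comm₀ (by linarith) two_pos]; linarith
  nlinarith [sq_nonneg (r x - 1)]

variable {r : ℕ → E → ℝ} {ε : ℕ → ℝ}

theorem isContiguous_pi_withDensity_of_abs_sub_one_le (hr : ∀ n, Measurable (r n))
    (hr1 : ∀ᶠ n in atTop, ∫ x, r n x ∂μ = 1) (hε : ε =O[atTop] fun n : ℕ => 1 / √(n : ℝ))
    (hrε : ∀ᶠ n in atTop, ∀ᵐ x ∂μ, |r n x - 1| ≤ ε n) :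
    IsContiguous
      (fun n => Measure.pi fun _ : Fin n => μ.withDensity fun x => ENNReal.ofReal (r n x))
      (fun n => Measure.pi fun _ : Fin n => μ) := by
  refine .of_eventually_sq_le_one_add_pow (isBigO_two_mul_sq_of_isBigO_one_div_sqrt hε) ?_
  have hε1 := (tendsto_zero_of_isBigO_one_div_sqrt hε).eventually_le_const one_pos
  filter_upwards [hr1, hrε, hε1] with n hn1 hnε hn A hA
  have hint : Integrable (r n) μ := .of_integral_ne_zero (by simp [hn1])
  refine (pi_withDensity_apply_sq_le (hr n).ennreal_ofReal hA).trans ?_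
  rw [Fintype.card_fin]
  gcongr
  exact lintegral_ofReal_sq_le hint hn1 hnε hn

theorem isContiguous_pi_of_abs_sub_one_le (hr : ∀ n, Measurable (r n))
    (hr1 : ∀ᶠ n in atTop, ∫ x, r n x ∂μ = 1) (hε : ε =O[atTop] fun n : ℕ => 1 / √(n : ℝ))
    (hrε : ∀ᶠ n in atTop, ∀ᵐ x ∂μ, |r n x - 1| ≤ ε n) :
    IsContiguous (fun n => Measure.pi fun _ : Fin n => μ)
      (fun n => Measure.pi fun _ : Fin n => μ.withDensity fun x => ENNReal.ofReal (r n x)) := by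
  refine .of_eventually_sq_le_one_add_pow (isBigO_two_mul_sq_of_isBigO_one_div_sqrt hε) ?_
  have hε2 := (tendsto_zero_of_isBigO_one_div_sqrt hε).eventually_le_const one_half_pos
  filter_upwards [hr1, hrε, hε2] with n hn1 hnε hn A hA
  have hint : Integrable (r n) μ := .of_integral_ne_zero (by simp [hn1])
  have hpos : ∀ᵐ x ∂μ, 0 < r n x := hnε.mono fun x hx => by linarith [(abs_le.1 hx).1]
  have : IsProbabilityMeasure (μ.withDensity fun x => ENNReal.ofReal (r n x)) := by
    constructor
    rw [withDensity_apply _ .univ, Measure.restrict_univ,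
      ← ofReal_integral_eq_lintegral_ofReal hint (hpos.mono fun x hx => hx.le), hn1,
      ENNReal.ofReal_one]
  refine (pi_apply_sq_le_pi_withDensity (hr n).ennreal_ofReal
    (hpos.mono fun x hx => (ENNReal.ofReal_pos.2 hx).ne')
    (ae_of_all _ fun x => ENNReal.ofReal_ne_top) hA).trans ?_
  rw [Fintype.card_fin]
  gcongr
  exact lintegral_inv_ofReal_le hint hn1 hnε hn

theorem abs_integral_sub_one_le {h : E → ℝ} {ε : ℝ} (hm : Measurable h)
    (hε : ∀ᵐ x ∂μ, |h x - 1| ≤ ε) : |∫ x, h x ∂μ - 1| ≤ ε := by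
  have hint : Integrable h μ := by
    have : Integrable (fun x => h x - 1) μ := .of_bound (by fun_prop) ε hε
    simpa only [Pi.add_def, sub_add_cancel] using this.add (integrable_const 1)
  simpa [integral_sub hint (integrable_const 1)] using
    norm_integral_le_of_norm_le_const (f := fun x => h x - 1) hε

theorem abs_inv_mul_sub_one_le {G y ε : ℝ} (hG : |G - 1| ≤ ε) (hy : |y - 1| ≤ ε)
    (hε : ε ≤ 1 / 2) : |G⁻¹ * y - 1| ≤ 4 * ε := by
  have hG2 : 1 / 2 ≤ G := by linarith [(abs_le.1 hG).1]
  have hε0 : 0 ≤ ε := (abs_nonneg _).trans hG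
  have hyG : |y - G| ≤ 2 * ε := by
    linarith [abs_sub_le y 1 G, abs_sub_comm 1 G]
  calc |G⁻¹ * y - 1| = |y - G| / G := by
        rw [← abs_of_pos (by linarith : 0 < G), ← abs_div, abs_of_pos (by linarith : 0 < G),
          sub_div, div_self (by linarith), inv_mul_eq_div]
    _ ≤ 4 * ε := by rw [div_le_iff₀ (by linarith)]; nlinarith

theorem isContiguous_pi_normalized {h : ℕ → E → ℝ} {ε : ℕ → ℝ} (hm : ∀ n, Measurable (h n))
    (hε : ε =O[atTop] fun n : ℕ => 1 / √(n : ℝ))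
    (hle : ∀ᶠ n in atTop, ∀ᵐ x ∂μ, |h n x - 1| ≤ ε n) :
    IsContiguous (fun n => Measure.pi fun _ : Fin n =>
        μ.withDensity fun x => ENNReal.ofReal ((∫ y, h n y ∂μ)⁻¹ * h n x))
      (fun n => Measure.pi fun _ : Fin n => μ) ∧
    IsContiguous (fun n => Measure.pi fun _ : Fin n => μ)
      (fun n => Measure.pi fun _ : Fin n =>
        μ.withDensity fun x => ENNReal.ofReal ((∫ y, h n y ∂μ)⁻¹ * h n x)) := by
  have hε2 := (tendsto_zero_of_isBigO_one_div_sqrt hε).eventually_le_const one_half_pos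
  have hone : ∀ᶠ n in atTop, ∫ x, (∫ y, h n y ∂μ)⁻¹ * h n x ∂μ = 1 := by
    filter_upwards [hle, hε2] with n hn hn2
    have hpos : 0 < ∫ y, h n y ∂μ := by
      linarith [(abs_le.1 (abs_integral_sub_one_le (hm n) hn)).1]
    rw [integral_const_mul, inv_mul_cancel₀ hpos.ne']
  have hnear : ∀ᶠ n in atTop, ∀ᵐ x ∂μ, |(∫ y, h n y ∂μ)⁻¹ * h n x - 1| ≤ 4 * ε n := by
    filter_upwards [hle, hε2] with n hn hn2
    filter_upwards [hn] with x hx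
    exact abs_inv_mul_sub_one_le (abs_integral_sub_one_le (hm n) hn) hx hn2
  have hrm (n : ℕ) : Measurable fun x => (∫ y, h n y ∂μ)⁻¹ * h n x := (hm n).const_mul _
  exact ⟨isContiguous_pi_withDensity_of_abs_sub_one_le hrm hone (hε.const_mul_left 4) hnear,
    isContiguous_pi_of_abs_sub_one_le hrm hone (hε.const_mul_left 4) hnear⟩

end LocalAlternatives

section Moments

open Polynomial

theorem integrable_of_continuous_of_ae_mem_isCompact {X : Type*} [TopologicalSpace X]
    [MeasurableSpace X] [OpensMeasurableSpace X] [T2Space X] {μ : Measure X} [IsFiniteMeasure μ]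
    {K : Set X} (hK : IsCompact K) (hμ : ∀ᵐ x ∂μ, x ∈ K) {g : X → ℝ} (hg : Continuous g) :
    Integrable g μ := by
  rw [← Measure.restrict_eq_self_of_ae_mem hμ]
  exact hg.continuousOn.integrableOn_compact hK

theorem tendsto_integral_of_abs_sub_lt {μ : Measure ℝ} [IsFiniteMeasure μ] {K : Set ℝ}
    (hK : IsCompact K) (hμ : ∀ᵐ s ∂μ, s ∈ K) {g : ℝ → ℝ} (hg : Continuous g) {q : ℕ → ℝ[X]}
    (hq : ∀ k, ∀ s ∈ K, |(q k).eval s - g s| < 1 / ((k : ℝ) + 1)) :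
    Tendsto (fun k => ∫ s, (q k).eval s ∂μ) atTop (𝓝 (∫ s, g s ∂μ)) := by
  have hbound (k : ℕ) : ‖∫ s, (q k).eval s ∂μ - ∫ s, g s ∂μ‖ ≤
      1 / ((k : ℝ) + 1) * μ.real Set.univ := by
    rw [← integral_sub (integrable_of_continuous_of_ae_mem_isCompact hK hμ (q k).continuous)
      (integrable_of_continuous_of_ae_mem_isCompact hK hμ hg)]
    exact norm_integral_le_of_norm_le_const (hμ.mono fun s hs => (hq k s hs).le)
  rw [tendsto_iff_norm_sub_tendsto_zero]
  refine squeeze_zero (fun k => norm_nonneg _) hbound ?_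
  simpa using tendsto_one_div_add_atTop_nhds_zero_nat.mul_const (μ.real Set.univ)

theorem integral_polynomial_eq_sum {μ : Measure ℝ} (hμ : ∀ n : ℕ, Integrable (fun s => s ^ n) μ)
    (q : ℝ[X]) :
    ∫ s, q.eval s ∂μ = ∑ i ∈ Finset.range (q.natDegree + 1), q.coeff i * ∫ s, s ^ i ∂μ := by
  simp_rw [eval_eq_sum_range]
  rw [integral_finsetSum _ fun i _ => (hμ i).const_mul _]
  simp_rw [integral_const_mul]

theorem measure_eq_of_forall_integral_pow_eq {μ ν : Measure ℝ} [IsFiniteMeasure μ]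
    [IsFiniteMeasure ν] {a b : ℝ} (hμ : ∀ᵐ s ∂μ, s ∈ Set.Icc a b) (hν : ∀ᵐ s ∂ν, s ∈ Set.Icc a b)
    (hμν : ∀ n : ℕ, ∫ s, s ^ n ∂μ = ∫ s, s ^ n ∂ν) : μ = ν := by
  refine ext_of_forall_integral_eq_of_IsFiniteMeasure fun g => ?_
  choose q hq using fun k : ℕ => exists_polynomial_near_of_continuousOn a b g
    g.continuous.continuousOn (1 / ((k : ℝ) + 1)) Nat.one_div_pos_of_nat
  have integrable_pow {ξ : Measure ℝ} [IsFiniteMeasure ξ] (hξ : ∀ᵐ s ∂ξ, s ∈ Set.Icc a b) (n : ℕ) :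
      Integrable (fun s => s ^ n) ξ :=
    integrable_of_continuous_of_ae_mem_isCompact isCompact_Icc hξ (continuous_pow n)
  refine tendsto_nhds_unique (tendsto_integral_of_abs_sub_lt isCompact_Icc hμ g.continuous hq) ?_
  simp_rw [integral_polynomial_eq_sum (integrable_pow hμ), hμν,
    ← integral_polynomial_eq_sum (integrable_pow hν)]
  exact tendsto_integral_of_abs_sub_lt isCompact_Icc hν g.continuous hq

theorem choose_mul_integral_eq_coeff {Ω : Type*} [MeasurableSpace Ω] {μ : Measure Ω}
    {Y Z : Ω → ℝ} (hint : ∀ i j : ℕ, Integrable (fun x => Z x ^ i * Y x ^ j) μ) {n m : ℕ}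
    (hmn : m ≤ n) {q : ℝ[X]} (hq : ∀ t : ℝ, ∫ x, (t * Z x + Y x) ^ n ∂μ = q.eval t) :
    n.choose m * ∫ x, Z x ^ m * Y x ^ (n - m) ∂μ = q.coeff m := by
  have hexpand : q = ∑ i ∈ Finset.range (n + 1),
      monomial i (n.choose i * ∫ x, Z x ^ i * Y x ^ (n - i) ∂μ) := by
    refine Polynomial.funext fun t => ?_
    have hterm (x : Ω) : (t * Z x + Y x) ^ n = ∑ i ∈ Finset.range (n + 1),
        t ^ i * n.choose i * (Z x ^ i * Y x ^ (n - i)) := by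
      rw [add_pow]
      exact Finset.sum_congr rfl fun i _ => by ring
    simp_rw [← hq, hterm, eval_finsetSum, eval_monomial]
    rw [integral_finsetSum _ fun i _ => (hint i (n - i)).const_mul _]
    exact Finset.sum_congr rfl fun i _ => by rw [integral_const_mul]; ring
  rw [hexpand, finsetSum_coeff]
  simp [coeff_monomial, Nat.lt_succ_of_le hmn]

theorem coeff_two_quadratic_pow (a b : ℝ) (k : ℕ) :
    ((1 + C a * X + C b * X ^ 2) ^ (k + 1)).coeff 2 = (k + 1) * (k * a ^ 2 / 2 + b) := by
  set P := (1 + C a * X + C b * X ^ 2) ^ (k + 1) with hP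
  have hcoeff : (derivative (derivative P)).coeff 0 = P.coeff 2 * 2 := by
    simp [coeff_derivative, one_add_one_eq_two]
  have hderiv : (derivative (derivative P)).coeff 0 = 2 * ((k + 1) * (k * a ^ 2 / 2 + b)) := by
    rw [hP, coeff_zero_eq_eval_zero]
    cases k <;> simp [derivative_pow] <;> ring
  linarith

end Moments

section Sphere

open Polynomial

variable {ι : Type*} [Fintype ι] [DecidableEq ι]

/-- The uniform distribution on the unit sphere of `ℝ^ι`, as a measure on the ambient space: it is
carried by the sphere and invariant under orthogonal matrices. Total mass one is not included; it
is assumed as `IsProbabilityMeasure U`. -/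
structure IsUniformOnSphere (U : Measure (ι → ℝ)) : Prop where
  ae_dotProduct_self : ∀ᵐ x ∂U, x ⬝ᵥ x = 1
  map_mulVec : ∀ O ∈ orthogonalGroup ι ℝ, U.map (O *ᵥ ·) = U

theorem exists_mem_orthogonalGroup_mulVec_eq {v w : ι → ℝ} (h : v ⬝ᵥ v = w ⬝ᵥ w) :
    ∃ O ∈ orthogonalGroup ι ℝ, O *ᵥ v = w := by
  let e := EuclideanSpace.basisFun ι ℝ
  let R := (ℝ ∙ (WithLp.toLp 2 v - WithLp.toLp 2 w))ᗮ.reflection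
  have hnorm : ‖WithLp.toLp 2 v‖ = ‖WithLp.toLp 2 w‖ := by
    simpa [EuclideanSpace.norm_eq, sq, dotProduct] using congrArg Real.sqrt h
  refine ⟨R.toMatrix e.toBasis e.toBasis, R.toMatrix_mem_unitaryGroup e e, ?_⟩
  have hR := LinearMap.toMatrix_mulVec_repr e.toBasis e.toBasis (R : _ →ₗ[ℝ] _) (WithLp.toLp 2 v)
  have hRv : R (WithLp.toLp 2 v) = WithLp.toLp 2 w := Submodule.reflection_sub hnorm
  exact hR.trans <| congrArg WithLp.ofLp hRv

namespace IsUniformOnSphere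

variable {U : Measure (ι → ℝ)} (hU : IsUniformOnSphere U) {v w θ : ι → ℝ}
include hU

theorem map_dotProduct_eq (h : v ⬝ᵥ v = w ⬝ᵥ w) :
    U.map (fun x => x ⬝ᵥ v) = U.map (fun x => x ⬝ᵥ w) := by
  obtain ⟨O, hO, rfl⟩ := exists_mem_orthogonalGroup_mulVec_eq h
  have hrot (x : ι → ℝ) : x ⬝ᵥ O *ᵥ v = (Oᵀ *ᵥ x) ⬝ᵥ v := by
    rw [dotProduct_mulVec, mulVec_transpose]
  have hOt : Oᵀ ∈ orthogonalGroup ι ℝ := by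
    rwa [mem_orthogonalGroup_iff, transpose_transpose, ← mem_orthogonalGroup_iff']
  conv_lhs => rw [← hU.map_mulVec Oᵀ hOt]
  rw [Measure.map_map (by fun_prop) (by fun_prop)]
  simp_rw [hrot, Function.comp_def]

theorem integral_dotProduct_pow_eq (h : v ⬝ᵥ v = w ⬝ᵥ w) (n : ℕ) :
    ∫ x, (x ⬝ᵥ v) ^ n ∂U = ∫ x, (x ⬝ᵥ w) ^ n ∂U := by
  have hmap (u : ι → ℝ) : ∫ x, (x ⬝ᵥ u) ^ n ∂U = ∫ s, s ^ n ∂U.map (fun x => x ⬝ᵥ u) :=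
    (integral_map (by fun_prop) (continuous_pow n).aestronglyMeasurable).symm
  rw [hmap, hmap, hU.map_dotProduct_eq h]

theorem integral_dotProduct_pow_odd (v : ι → ℝ) (k : ℕ) :
    ∫ x, (x ⬝ᵥ v) ^ (2 * k + 1) ∂U = 0 := by
  have h := hU.integral_dotProduct_pow_eq (v := -v) (w := v) (by simp) (2 * k + 1)
  simp only [dotProduct_neg, (odd_two_mul_add_one k).neg_pow, integral_neg] at h
  linarith

theorem integral_dotProduct_pow_even (hθ : θ ⬝ᵥ θ = 1) (v : ι → ℝ) (k : ℕ) :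
    ∫ x, (x ⬝ᵥ v) ^ (2 * k) ∂U = (v ⬝ᵥ v) ^ k * ∫ x, (x ⬝ᵥ θ) ^ (2 * k) ∂U := by
  have hv : 0 ≤ v ⬝ᵥ v := by simpa using dotProduct_star_self_nonneg v
  have hscale : v ⬝ᵥ v = (√(v ⬝ᵥ v) • θ) ⬝ᵥ (√(v ⬝ᵥ v) • θ) := by
    simp [hθ, Real.mul_self_sqrt hv]
  rw [hU.integral_dotProduct_pow_eq hscale]
  simp_rw [dotProduct_smul, smul_eq_mul, mul_pow, pow_mul √(v ⬝ᵥ v), Real.sq_sqrt hv]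
  exact integral_const_mul _ _

theorem ae_sq_dotProduct_le_one (hθ : θ ⬝ᵥ θ = 1) : ∀ᵐ x ∂U, (x ⬝ᵥ θ) ^ 2 ≤ 1 := by
  filter_upwards [hU.ae_dotProduct_self] with x hx
  have h := Finset.sum_mul_sq_le_sq_mul_sq Finset.univ x θ
  simp only [sq] at h ⊢
  exact h.trans_eq <| by rw [← dotProduct, ← dotProduct, hx, hθ, one_mul]

variable [IsProbabilityMeasure U]

theorem integrable_of_continuous {g : (ι → ℝ) → ℝ} (hg : Continuous g) : Integrable g U := by
  refine integrable_of_continuous_of_ae_mem_isCompact (isCompact_closedBall 0 1) ?_ hg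
  filter_upwards [hU.ae_dotProduct_self] with x hx
  rw [mem_closedBall_zero_iff, pi_norm_le_iff_of_nonneg zero_le_one]
  intro i
  rw [Real.norm_eq_abs, ← sq_le_one_iff_abs_le_one, ← hx, sq]
  exact Finset.single_le_sum (f := fun i => x i * x i) (fun j _ => mul_self_nonneg _)
    (Finset.mem_univ i)

theorem integral_dotProduct_pow_mul_sq (hθ : θ ⬝ᵥ θ = 1) (u : ι → ℝ) (k : ℕ) :
    (2 * k + 1) * ∫ x, (x ⬝ᵥ u) ^ 2 * (x ⬝ᵥ θ) ^ (2 * k) ∂U =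
      (2 * k * (θ ⬝ᵥ u) ^ 2 + u ⬝ᵥ u) * ∫ x, (x ⬝ᵥ θ) ^ (2 * k + 2) ∂U := by
  -- By rotation invariance `∫ (x ⬝ᵥ (θ + t u)) ^ (2k+2) = ‖θ + t u‖ ^ (2k+2) * M` for all `t`;
  -- the claim compares the coefficients of `t²`.
  set M := ∫ x, (x ⬝ᵥ θ) ^ (2 * k + 2) ∂U with hM
  have hq (t : ℝ) : ∫ x, (t * (x ⬝ᵥ u) + x ⬝ᵥ θ) ^ (2 * k + 2) ∂U =
      (C M * (1 + C (2 * (θ ⬝ᵥ u)) * X + C (u ⬝ᵥ u) * X ^ 2) ^ (k + 1)).eval t := by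
    have hlin (x : ι → ℝ) : t * (x ⬝ᵥ u) + x ⬝ᵥ θ = x ⬝ᵥ (t • u + θ) := by
      simp [dotProduct_add]
    have hnorm : (t • u + θ) ⬝ᵥ (t • u + θ) = 1 + 2 * (θ ⬝ᵥ u) * t + (u ⬝ᵥ u) * t ^ 2 := by
      simp only [dotProduct_add, add_dotProduct, dotProduct_smul, smul_dotProduct, smul_eq_mul, hθ,
        dotProduct_comm u θ]
      ring
    have heven := hU.integral_dotProduct_pow_even hθ (t • u + θ) (k + 1)
    simp_rw [hlin]
    rw [mul_add_one, hnorm] at heven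
    rw [heven, mul_comm, hM]
    simp only [eval_mul, eval_pow, eval_add, eval_one, eval_C, eval_X]
  have h := choose_mul_integral_eq_coeff (m := 2) (Z := fun x => x ⬝ᵥ u) (Y := fun x => x ⬝ᵥ θ)
    (fun i j => hU.integrable_of_continuous (by fun_prop)) (by lia) hq
  rw [coeff_C_mul, coeff_two_quadratic_pow, Nat.cast_choose_two] at h
  push_cast at h
  have hk : (k : ℝ) + 1 ≠ 0 := by positivity
  refine mul_left_cancel₀ hk ?_
  linarith

theorem integral_dotProduct_pow_add_two (hθ : θ ⬝ᵥ θ = 1) (k : ℕ) :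
    (2 * k + Fintype.card ι) * ∫ x, (x ⬝ᵥ θ) ^ (2 * k + 2) ∂U =
      (2 * k + 1) * ∫ x, (x ⬝ᵥ θ) ^ (2 * k) ∂U := by
  have hsphere : ∫ x, (x ⬝ᵥ θ) ^ (2 * k) ∂U =
      ∑ i, ∫ x, (x ⬝ᵥ Pi.single i 1) ^ 2 * (x ⬝ᵥ θ) ^ (2 * k) ∂U := by
    rw [← integral_finsetSum _ fun i _ => hU.integrable_of_continuous (by fun_prop)]
    refine integral_congr_ae ?_
    filter_upwards [hU.ae_dotProduct_self] with x hx
    rw [← Finset.sum_mul]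
    simp_rw [dotProduct_single, mul_one, sq]
    rw [← dotProduct, hx, one_mul]
  rw [hsphere, Finset.mul_sum]
  simp_rw [hU.integral_dotProduct_pow_mul_sq hθ, dotProduct_single]
  simp only [mul_one, sq, Pi.single_eq_same]
  rw [← Finset.sum_mul, Finset.sum_add_distrib, ← Finset.mul_sum, ← dotProduct, hθ]
  rw [mul_one, Finset.sum_const, Finset.card_univ, nsmul_one]

end IsUniformOnSphere

end Sphere

section SphereMarginal

theorem intervalIntegrable_one_sub_sq_rpow {a : ℝ} (ha : -1 < a) :
    IntervalIntegrable (fun s : ℝ => (1 - s ^ 2) ^ a) volume (-1) 1 := by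
  have hright : IntervalIntegrable (fun s : ℝ => (1 - s ^ 2) ^ a) volume 0 1 := by
    have hsub : IntervalIntegrable (fun s : ℝ => (1 - s) ^ a) volume 0 1 := by
      simpa using ((intervalIntegral.intervalIntegrable_rpow' (a := 0) (b := 1) ha).comp_sub_left
        1).symm
    have hadd : ContinuousOn (fun s : ℝ => (1 + s) ^ a) (Set.uIcc 0 1) := by
      refine ContinuousOn.rpow_const (by fun_prop) fun s hs => Or.inl ?_
      rw [Set.uIcc_of_le zero_le_one] at hs
      linarith [hs.1]
    refine (hsub.mul_continuousOn hadd).congr fun s hs => ?_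
    rw [Set.uIoc_of_le zero_le_one] at hs
    rw [← Real.mul_rpow (by linarith [hs.2]) (by linarith [hs.1])]
    ring_nf
  have hleft : IntervalIntegrable (fun s : ℝ => (1 - s ^ 2) ^ a) volume (-1) 0 := by
    simpa using (hright.comp_sub_left 0).symm
  exact hleft.trans hright

theorem intervalIntegrable_one_sub_sq_rpow_mul_pow {a : ℝ} (ha : -1 < a) (n : ℕ) :
    IntervalIntegrable (fun s : ℝ => (1 - s ^ 2) ^ a * s ^ n) volume (-1) 1 :=
  (intervalIntegrable_one_sub_sq_rpow ha).mul_continuousOn (by fun_prop)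

theorem integral_one_sub_sq_rpow_pos {a : ℝ} (ha : -1 < a) :
    0 < ∫ s in (-1 : ℝ)..1, (1 - s ^ 2) ^ a :=
  intervalIntegral.intervalIntegral_pos_of_pos_on (intervalIntegrable_one_sub_sq_rpow ha)
    (fun s hs => Real.rpow_pos_of_pos (by nlinarith [hs.1, hs.2]) _) (by norm_num)

theorem integral_one_sub_sq_rpow_mul_pow_odd (a : ℝ) (k : ℕ) :
    ∫ s in (-1 : ℝ)..1, (1 - s ^ 2) ^ a * s ^ (2 * k + 1) = 0 := by
  have h := intervalIntegral.integral_comp_neg (a := -1) (b := 1)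
    fun s : ℝ => (1 - s ^ 2) ^ a * s ^ (2 * k + 1)
  simp only [neg_sq, (odd_two_mul_add_one k).neg_pow, mul_neg, intervalIntegral.integral_neg,
    neg_neg] at h
  linarith

theorem hasDerivAt_pow_mul_one_sub_sq_rpow (a : ℝ) (n : ℕ) {s : ℝ} (hs : s ^ 2 < 1) :
    HasDerivAt (fun s : ℝ => s ^ (n + 1) * (1 - s ^ 2) ^ (a + 1))
      ((n + 1) * ((1 - s ^ 2) ^ a * s ^ n) -
        (n + 2 * a + 3) * ((1 - s ^ 2) ^ a * s ^ (n + 2))) s := by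
  have hpos : 0 < 1 - s ^ 2 := sub_pos.2 hs
  have hin : HasDerivAt (fun s : ℝ => 1 - s ^ 2) (-(2 * s)) s := by
    simpa using (hasDerivAt_pow 2 s).const_sub 1
  refine ((hasDerivAt_pow (n + 1) s).mul
    (hin.rpow_const (p := a + 1) (Or.inl hpos.ne'))).congr_deriv ?_
  rw [add_sub_cancel_right, Real.rpow_add_one hpos.ne', Nat.add_sub_cancel]
  push_cast
  ring

theorem integral_one_sub_sq_rpow_mul_pow_add_two {a : ℝ} (ha : -1 < a) (n : ℕ) :
    (n + 2 * a + 3) * ∫ s in (-1 : ℝ)..1, (1 - s ^ 2) ^ a * s ^ (n + 2) =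
      (n + 1) * ∫ s in (-1 : ℝ)..1, (1 - s ^ 2) ^ a * s ^ n := by
  have hn := (intervalIntegrable_one_sub_sq_rpow_mul_pow ha n).const_mul ((n : ℝ) + 1)
  have hn2 := (intervalIntegrable_one_sub_sq_rpow_mul_pow ha (n + 2)).const_mul (n + 2 * a + 3)
  have hcont : ContinuousOn (fun s : ℝ => s ^ (n + 1) * (1 - s ^ 2) ^ (a + 1))
      (Set.Icc (-1) 1) :=
    (continuous_pow _).continuousOn.mul <|
      ContinuousOn.rpow_const (by fun_prop) fun _ _ => Or.inr (by linarith)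
  have hftc := intervalIntegral.integral_eq_sub_of_hasDerivAt_of_le (by norm_num) hcont
    (fun s hs => hasDerivAt_pow_mul_one_sub_sq_rpow a n (by nlinarith [hs.1, hs.2])) (hn.sub hn2)
  rw [intervalIntegral.integral_sub hn hn2, intervalIntegral.integral_const_mul,
    intervalIntegral.integral_const_mul] at hftc
  have hzero : (0 : ℝ) ^ (a + 1) = 0 := Real.zero_rpow (by linarith)
  norm_num [hzero] at hftc
  linarith

theorem neg_one_lt_sub_three_div_two {p : ℕ} (hp : 2 ≤ p) : -1 < ((p : ℝ) - 3) / 2 := by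
  have : (2 : ℝ) ≤ p := by exact_mod_cast hp
  linarith

theorem c0_pos {p : ℕ} (hp : 2 ≤ p) : 0 < c0 p :=
  one_div_pos.2 (integral_one_sub_sq_rpow_pos (neg_one_lt_sub_three_div_two hp))

/-- The probability measure on `[-1, 1]` with density `s ↦ c_p (1 - s²)^{(p-3)/2}`, which is the
law of `x ⬝ᵥ θ` for `x` uniform on the unit sphere of `ℝ^p`. -/
def sphereMarginal (p : ℕ) : Measure ℝ :=
  (volume.restrict (Set.Ioc (-1) 1)).withDensity fun s =>
    ENNReal.ofReal (c0 p * (1 - s ^ 2) ^ (((p : ℝ) - 3) / 2))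

theorem integral_sphereMarginal {p : ℕ} (hp : 2 ≤ p) (g : ℝ → ℝ) :
    ∫ s, g s ∂sphereMarginal p =
      c0 p * ∫ s in (-1 : ℝ)..1, (1 - s ^ 2) ^ (((p : ℝ) - 3) / 2) * g s := by
  rw [sphereMarginal, integral_withDensity_eq_integral_toReal_smul (by fun_prop)
    (ae_of_all _ fun _ => ENNReal.ofReal_lt_top),
    intervalIntegral.integral_of_le (by norm_num), ← integral_const_mul]
  refine setIntegral_congr_fun measurableSet_Ioc fun s hs => ?_
  have hw : 0 ≤ (1 - s ^ 2) ^ (((p : ℝ) - 3) / 2) :=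
    Real.rpow_nonneg (by nlinarith [hs.1, hs.2]) _
  simp only [ENNReal.toReal_ofReal (mul_nonneg (c0_pos hp).le hw), smul_eq_mul, mul_assoc]

theorem isFiniteMeasure_sphereMarginal {p : ℕ} (hp : 2 ≤ p) :
    IsFiniteMeasure (sphereMarginal p) :=
  isFiniteMeasure_withDensity_ofReal
    ((intervalIntegrable_one_sub_sq_rpow (neg_one_lt_sub_three_div_two hp)).const_mul _).1.2

theorem ae_sphereMarginal_mem_Icc (p : ℕ) : ∀ᵐ s ∂sphereMarginal p, s ∈ Set.Icc (-1) 1 :=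
  (withDensity_absolutelyContinuous _ _).ae_le <|
    (ae_restrict_mem measurableSet_Ioc).mono fun _ hs => Set.Ioc_subset_Icc_self hs

theorem integral_pow_sphereMarginal_odd {p : ℕ} (hp : 2 ≤ p) (k : ℕ) :
    ∫ s, s ^ (2 * k + 1) ∂sphereMarginal p = 0 := by
  rw [integral_sphereMarginal hp, integral_one_sub_sq_rpow_mul_pow_odd, mul_zero]

theorem integral_pow_sphereMarginal_add_two {p : ℕ} (hp : 2 ≤ p) (k : ℕ) :
    (2 * k + p) * ∫ s, s ^ (2 * k + 2) ∂sphereMarginal p =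
      (2 * k + 1) * ∫ s, s ^ (2 * k) ∂sphereMarginal p := by
  have h := integral_one_sub_sq_rpow_mul_pow_add_two (neg_one_lt_sub_three_div_two hp) (2 * k)
  push_cast at h
  rw [integral_sphereMarginal hp, integral_sphereMarginal hp]
  linear_combination c0 p * h

theorem integral_one_sphereMarginal {p : ℕ} (hp : 2 ≤ p) : ∫ _, (1 : ℝ) ∂sphereMarginal p = 1 := by
  have hpos := integral_one_sub_sq_rpow_pos (neg_one_lt_sub_three_div_two hp)
  rw [integral_sphereMarginal hp, c0]
  simp_rw [mul_one]
  exact one_div_mul_cancel hpos.ne'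

namespace IsUniformOnSphere

variable {p : ℕ} {U : Measure (Fin p → ℝ)} [IsProbabilityMeasure U] (hU : IsUniformOnSphere U)
  {θ : Fin p → ℝ}
include hU

theorem integral_dotProduct_pow_eq_sphereMarginal (hp : 2 ≤ p) (hθ : θ ⬝ᵥ θ = 1) (n : ℕ) :
    ∫ x, (x ⬝ᵥ θ) ^ n ∂U = ∫ s, s ^ n ∂sphereMarginal p := by
  obtain ⟨k, rfl | rfl⟩ := n.even_or_odd'
  · induction k with
    | zero => simpa using (integral_one_sphereMarginal hp).symm
    | succ k ih =>
      have hk : (2 * k + p : ℝ) ≠ 0 := by positivity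
      refine mul_left_cancel₀ hk ?_
      have h := hU.integral_dotProduct_pow_add_two hθ k
      rw [Fintype.card_fin] at h
      rw [mul_add_one, integral_pow_sphereMarginal_add_two hp, h, ih]
  · rw [hU.integral_dotProduct_pow_odd, integral_pow_sphereMarginal_odd hp]

theorem map_dotProduct_eq_sphereMarginal (hp : 2 ≤ p) (hθ : θ ⬝ᵥ θ = 1) :
    U.map (fun x => x ⬝ᵥ θ) = sphereMarginal p := by
  have := isFiniteMeasure_sphereMarginal hp
  refine measure_eq_of_forall_integral_pow_eq (a := -1) (b := 1) ?_ (ae_sphereMarginal_mem_Icc p)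
    fun n => ?_
  · refine (ae_map_iff (by fun_prop) measurableSet_Icc).2 ?_
    filter_upwards [hU.ae_sq_dotProduct_le_one hθ] with x hx
    exact abs_le.1 (sq_le_one_iff_abs_le_one _ |>.1 hx)
  · rw [integral_map (by fun_prop) (continuous_pow n).aestronglyMeasurable]
    exact hU.integral_dotProduct_pow_eq_sphereMarginal hp hθ n

theorem cKF_div_c0_eq (hp : 2 ≤ p) (hθ : θ ⬝ᵥ θ = 1) {f : ℝ → ℝ} (hf : Measurable f) (κ : ℝ) :
    cKF p κ f / c0 p = (∫ x, f (κ * (x ⬝ᵥ θ) ^ 2) ∂U)⁻¹ := by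
  have hmap := integral_map (μ := U) (φ := fun x => x ⬝ᵥ θ) (f := fun s => f (κ * s ^ 2))
    (by fun_prop) (Measurable.aestronglyMeasurable (by fun_prop))
  rw [← hmap, hU.map_dotProduct_eq_sphereMarginal hp hθ, integral_sphereMarginal hp, cKF, mul_inv,
    one_div, div_eq_mul_inv, mul_comm]

end IsUniformOnSphere

end SphereMarginal

section AxialAlternatives

namespace IsUniformOnSphere

theorem of_sum_sq {ι : Type*} [Fintype ι] [DecidableEq ι]
    {U : Measure (ι → ℝ)} (hsphere : U {x : ι → ℝ | ∑ a, x a ^ 2 = 1}ᶜ = 0)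
    (hrot : ∀ O : Matrix ι ι ℝ, O * Oᵀ = 1 → U.map (fun x => O.mulVec x) = U) :
    IsUniformOnSphere U where
  ae_dotProduct_self := by
    simp only [dotProduct, ← sq]
    exact hsphere
  map_mulVec O hO := hrot O ((mem_orthogonalGroup_iff _ _).1 hO)

theorem exists_eventually_ae_abs_axial_sub_one_le {ι : Type*} [Fintype ι] [DecidableEq ι]
    {U : Measure (ι → ℝ)} (hU : IsUniformOnSphere U) {θ : ι → ℝ} (hθ : θ ⬝ᵥ θ = 1) {f : ℝ → ℝ}
    (hf : (fun x => f x - 1) =O[𝓝 0] fun x => x) {κ : ℕ → ℝ} (hκ : Tendsto κ atTop (𝓝 0)) :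
    ∃ L : ℝ, ∀ᶠ n in atTop, ∀ᵐ x ∂U, |f (κ n * (x ⬝ᵥ θ) ^ 2) - 1| ≤ L * |κ n| := by
  obtain ⟨L, hL, hLf⟩ := hf.exists_nonneg
  obtain ⟨δ, hδ, hball⟩ := Metric.eventually_nhds_iff.1 hLf.bound
  refine ⟨L, ?_⟩
  filter_upwards [hκ.eventually (Metric.ball_mem_nhds 0 hδ)] with n hn
  filter_upwards [hU.ae_sq_dotProduct_le_one hθ] with x hx
  have hκx : |κ n * (x ⬝ᵥ θ) ^ 2| ≤ |κ n| := by
    rw [abs_mul, abs_sq]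
    exact mul_le_of_le_one_right (abs_nonneg _) hx
  have hκδ : dist (κ n * (x ⬝ᵥ θ) ^ 2) 0 < δ := by
    simpa only [dist_zero_right, Real.norm_eq_abs] using hκx.trans_lt (mem_ball_zero_iff.1 hn)
  exact (hball hκδ).trans (mul_le_mul_of_nonneg_left hκx hL)

end IsUniformOnSphere

/-- The axial distribution `P_{θ,κ,f}`: the density `x ↦ (c_{p,κ,f} / c_p) f(κ (x ⬝ᵥ θ)²)` with
respect to the measure `U` on `ℝ^p`, which is meant to be uniform on the unit sphere. -/
def axialMeasure {p : ℕ} (U : Measure (Fin p → ℝ)) (θ : Fin p → ℝ) (κ : ℝ) (f : ℝ → ℝ) :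
    Measure (Fin p → ℝ) :=
  U.withDensity fun x => ENNReal.ofReal ((cKF p κ f / c0 p) * f (κ * (x ⬝ᵥ θ) ^ 2))

theorem contiguity_of_axial_alternatives_general {p : ℕ} (hp : 2 ≤ p) {U : Measure (Fin p → ℝ)}
    [IsProbabilityMeasure U] (hU : IsUniformOnSphere U) {θ : Fin p → ℝ} (hθ : θ ⬝ᵥ θ = 1)
    {f : ℝ → ℝ} (hfm : Measurable f) (hf : (fun x => f x - 1) =O[𝓝 0] fun x => x) {κ : ℕ → ℝ}
    (hκ : κ =O[atTop] fun n : ℕ => 1 / √(n : ℝ)) :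
    IsContiguous (fun n => Measure.pi fun _ : Fin n => axialMeasure U θ (κ n) f)
        (fun n => Measure.pi fun _ : Fin n => U) ∧
      IsContiguous (fun n => Measure.pi fun _ : Fin n => U)
        (fun n => Measure.pi fun _ : Fin n => axialMeasure U θ (κ n) f) := by
  obtain ⟨L, hL⟩ := hU.exists_eventually_ae_abs_axial_sub_one_le hθ hf
    (tendsto_zero_of_isBigO_one_div_sqrt hκ)
  simp_rw [axialMeasure, hU.cKF_div_c0_eq hp hθ hfm]
  exact isContiguous_pi_normalized (fun n => by fun_prop) (hκ.abs_left.const_mul_left L) hL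

end AxialAlternatives

/-- Theorem 2.1, mutual contiguity.
`U` is the uniform (rotation-invariant) probability measure on the unit sphere
`S^{p-1} ⊆ ℝ^p`, `f ∈ 𝓕`, `θ ∈ S^{p-1}`, and `(κ_n)` is a sequence of nonzero reals with
`κ_n = O(1/√n)`.  Then for every sequence of measurable sets `A_n`,
`P_0^{(n)}(A_n) → 0` iff `P^{(n)}_{θ,κ_n,f}(A_n) → 0`. -/
theorem contiguity_of_axial_alternatives
    (p : ℕ) (hp : 2 ≤ p)
    (U : Measure (Fin p → ℝ)) [IsProbabilityMeasure U]
    (hUsphere : U {x : Fin p → ℝ | ∑ a, x a ^ 2 = 1}ᶜ = 0)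
    (hUrot : ∀ O : Matrix (Fin p) (Fin p) ℝ, O * Oᵀ = 1 →
      Measure.map (fun x => O.mulVec x) U = U)
    (θ : Fin p → ℝ) (hθ : ∑ a, θ a ^ 2 = 1)
    (f : ℝ → ℝ) (hf_pos : ∀ x, 0 < f x) (hf_mono : Monotone f)
    (hf_diff : ∀ᶠ x in 𝓝 (0:ℝ), DifferentiableAt ℝ f x)
    (hf_diff2 : DifferentiableAt ℝ (deriv f) 0)
    (hf0 : f 0 = 1) (hf'0 : deriv f 0 = 1)
    (κ : ℕ → ℝ) (hκ0 : ∀ n, κ n ≠ 0)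
    (hκO : (fun n => κ n) =O[atTop] (fun n : ℕ => 1 / Real.sqrt n))
    (A : ∀ n : ℕ, Set (Fin n → (Fin p → ℝ)))
    (hA : ∀ n, MeasurableSet (A n)) :
    Tendsto (fun n => Measure.pi (fun _ : Fin n => U) (A n)) atTop (𝓝 (0 : ℝ≥0∞)) ↔
      Tendsto (fun n => Measure.pi (fun _ : Fin n =>
          U.withDensity (fun x => ENNReal.ofReal
            ((cKF p (κ n) f / c0 p) * f (κ n * (∑ a, x a * θ a) ^ 2)))) (A n))
        atTop (𝓝 (0 : ℝ≥0∞)) := by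
  obtain ⟨h_alt, h_null⟩ := contiguity_of_axial_alternatives_general hp (.of_sum_sq hUsphere hUrot)
    (by simpa only [dotProduct, sq] using hθ) hf_mono.measurable
    (by simpa only [hf0, sub_zero] using hf_diff.self_of_nhds.isBigO_sub) hκO
  exact ⟨h_alt A hA, h_null A hA⟩

end
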